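/- Let p be a prime, SNR > 0, f ∈ {0,1,…,p−1} an integer, and ε ∈ ℝ with δ(p,ε) > 0. Let X be a random variable uniformly distributed over the constellation Λ_p, and let Θ be a real random variable statistically independent of X. Define U = ((f + ε)·X + Θ)*. Then 𝔼[exp(−(SNR/8)·U²)] ≤ 1/p + √(2π/(3·δ(p,ε)²·SNR)). -/

import Mathlib

open MeasureTheory ProbabilityTheory Real Filter
open scoped ENNReal

noncomputable section

/-- Reduction of `x` modulo the half-open interval `[a, b)`. -/
def modIco (a b x : ℝ) : ℝ := a + (b - a) * Int.fract ((x - a) / (b - a))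

/-- `L = √12`. -/
def Lc : ℝ := Real.sqrt 12

/-- `x*`: reduction of `x` modulo the basic interval `I = [-L/2, L/2)`. -/
def starI (x : ℝ) : ℝ := modIco (-(Lc / 2)) (Lc / 2) x

/-- `δ(p, γ) = min_{l ∈ {1,…,p−1}} |l·γ − ⌊l·γ⌉|`. -/
def deltaP (p : ℕ) (γ : ℝ) : ℝ :=
  sInf {d : ℝ | ∃ l : ℕ, 1 ≤ l ∧ l ≤ p - 1 ∧ d = |(l : ℝ) * γ - round ((l : ℝ) * γ)|}

/-- The set `P'(γ)` of admissible primes (depends on the SNR). -/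
def Pgood (SNR : ℝ) (γ : ℝ) : Set ℕ :=
  {p | p.Prime ∧
    Real.exp (-(3 * SNR / (2 * (p : ℝ) ^ 2)) * (modIco (-(1/4)) (1/4) γ) ^ 2) <
      1 - 2 * (p : ℝ) * Real.exp (-(3 * SNR / 8))}

/-- First rate expression in the achievable-rate theorem. -/
def rateA (SNR : ℝ) (p : ℕ) (γ : ℝ) : ℝ :=
  -(1/2) * Real.logb 2 (1/(p : ℝ)^2 + Real.sqrt (2 * π / (3 * SNR))
    + (1/(p : ℝ)) * Real.exp (-(3 * SNR / (2 * (p : ℝ)^2)) * (deltaP p γ)^2)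
    + 2 * Real.exp (-(3 * SNR / 8)))

/-- Second rate expression in the achievable-rate theorem. -/
def rateB (SNR : ℝ) (p : ℕ) (γ : ℝ) : ℝ :=
  -Real.logb 2 (1/(p : ℝ) + Real.sqrt (2 * π / (3 * (deltaP p γ)^2 * SNR))
    + 2 * Real.exp (-(3 * SNR / 8)))

/-- The `k`-th point of the constellation `Λ_p`. -/
def constPt (p : ℕ) (k : ℕ) : ℝ := starI (Lc / (p : ℝ) * (k : ℝ))

/-- The constellation `Λ_p` as a finite set of reals. -/
def constSet (p : ℕ) : Finset ℝ := (Finset.range p).image (constPt p)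

/-- The uniform probability measure on the constellation `Λ_p`. -/
def uniformConst (p : ℕ) : Measure ℝ :=
  (p : ℝ≥0∞)⁻¹ • ∑ k ∈ Finset.range p, Measure.dirac (constPt p k)

/-!
Since `X` and `Θ` are independent, it suffices to bound the expectation over `X` for each fixed
value `θ` of `Θ`. Put `γ = f + ε`. Two constellation points differ by `L m / p` with `0 < |m| < p`,
so the corresponding values of `(γ X + θ)*` differ by `(L / p) (γ m - p n)` for some integer `n`,
hence by at least `d = L δ(p, γ) / p`; moreover `δ(p, γ) = δ(p, ε)` as `f` is an integer. In a
`d`-separated family drop the point of least absolute value, which costs at most `1`, and attach to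
every other point the interval of length `d` on the side facing the dropped point. These intervals
are disjoint and the Gaussian is at least its value at the attached point there, so the sum of its
values over the family is at most `1` plus its integral divided by `d`.
-/

section FacingCell

/-- The half-open interval of length `d` that has `x` as an endpoint and lies on the side of `x`
facing `u` (when `x ≠ u`); it serves to compare a value at `x` with an integral. -/
def facingCell (u d x : ℝ) : Set ℝ := if u < x then Set.Ioc (x - d) x else Set.Ioc x (x + d)

variable {u d x y : ℝ}

lemma measurableSet_facingCell : MeasurableSet (facingCell u d x) := by
  unfold facingCell
  split_ifs <;> exact measurableSet_Ioc

lemma volume_facingCell : volume (facingCell u d x) = ENNReal.ofReal d := by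
  unfold facingCell
  split_ifs <;> simp

lemma abs_le_abs_of_mem_facingCell (hu : |u| ≤ |x|) (hux : d ≤ |x - u|)
    (hy : y ∈ facingCell u d x) : |y| ≤ |x| := by
  unfold facingCell at hy
  split_ifs at hy <;> grind

lemma disjoint_facingCell (hx : d ≤ |x - u|) (hy : d ≤ |y - u|) (hxy : d ≤ |x - y|) :
    Disjoint (facingCell u d x) (facingCell u d y) := by
  rw [Set.disjoint_left]
  unfold facingCell
  split_ifs <;> grind

end FacingCell

lemma sum_mul_measureReal_le_integral {ι α : Type*} [MeasurableSpace α] {μ : Measure α}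
    {f : α → ℝ} (hf : Integrable f μ) (hf0 : 0 ≤ᵐ[μ] f) {s : Finset ι} {A : ι → Set α}
    {c : ι → ℝ} (hA : ∀ i ∈ s, MeasurableSet (A i)) (hμA : ∀ i ∈ s, μ (A i) ≠ ∞)
    (hdisj : (s : Set ι).PairwiseDisjoint A) (hc : ∀ i ∈ s, ∀ x ∈ A i, c i ≤ f x) :
    ∑ i ∈ s, c i * μ.real (A i) ≤ ∫ x, f x ∂μ :=
  calc ∑ i ∈ s, c i * μ.real (A i)
      ≤ ∑ i ∈ s, ∫ x in A i, f x ∂μ := Finset.sum_le_sum fun i hi =>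
        setIntegral_ge_of_const_le_real (hA i hi) (hμA i hi) (hc i hi) hf.integrableOn
    _ = ∫ x in ⋃ i ∈ s, A i, f x ∂μ :=
        (integral_biUnion_finset s hA hdisj fun _ _ => hf.integrableOn).symm
    _ ≤ ∫ x, f x ∂μ := setIntegral_le_integral hf hf0

lemma sum_le_apply_zero_add_integral_div {ι : Type*} {f : ℝ → ℝ} (hf : Integrable f)
    (hf0 : 0 ≤ f) (hanti : ∀ x y, |x| ≤ |y| → f y ≤ f x) {d : ℝ} (hd : 0 < d) {s : Finset ι}
    {x : ι → ℝ} (hsep : (s : Set ι).Pairwise fun i j => d ≤ |x i - x j|) :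
    ∑ i ∈ s, f (x i) ≤ f 0 + (∫ t, f t) / d := by
  classical
  obtain rfl | hs := s.eq_empty_or_nonempty
  · simpa using add_nonneg (hf0 0) (div_nonneg (integral_nonneg hf0) hd.le)
  obtain ⟨k, hk, hmin⟩ := s.exists_min_image (fun i => |x i|) hs
  have hsepk : ∀ i ∈ s.erase k, d ≤ |x i - x k| := fun i hi =>
    hsep (Finset.mem_of_mem_erase hi) hk (Finset.ne_of_mem_erase hi)
  have hdisj : (s.erase k : Set ι).PairwiseDisjoint fun i => facingCell (x k) d (x i) :=
    fun i hi j hj hij => disjoint_facingCell (hsepk i hi) (hsepk j hj)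
      (hsep (Finset.mem_of_mem_erase hi) (Finset.mem_of_mem_erase hj) hij)
  have hpack : ∑ i ∈ s.erase k, f (x i) * d ≤ ∫ t, f t := by
    simpa [Measure.real, volume_facingCell, hd.le] using
      sum_mul_measureReal_le_integral hf (.of_forall hf0)
        (fun _ _ => measurableSet_facingCell) (by simp [volume_facingCell]) hdisj
        fun i hi y hy => hanti y (x i) <|
          abs_le_abs_of_mem_facingCell (hmin i (Finset.mem_of_mem_erase hi)) (hsepk i hi) hy
  rw [← Finset.add_sum_erase s _ hk]
  exact add_le_add (hanti 0 (x k) (by simp))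
    ((le_div_iff₀ hd).2 (by rwa [Finset.sum_mul]))

lemma sum_exp_neg_mul_sq_le {ι : Type*} {c d : ℝ} (hc : 0 < c) (hd : 0 < d) {s : Finset ι}
    {x : ι → ℝ} (hsep : (s : Set ι).Pairwise fun i j => d ≤ |x i - x j|) :
    ∑ i ∈ s, exp (-c * x i ^ 2) ≤ 1 + √(π / c) / d := by
  have hanti : ∀ x y : ℝ, |x| ≤ |y| → exp (-c * y ^ 2) ≤ exp (-c * x ^ 2) := fun x y hxy => by
    simpa [hc] using sq_le_sq.2 hxy
  have hsum := sum_le_apply_zero_add_integral_div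
    (integrable_exp_neg_mul_sq hc) (fun t => (exp_pos _).le) hanti hd hsep
  rw [integral_gaussian] at hsum
  simpa using hsum

lemma integrable_exp_neg_mul_sq_comp {α : Type*} [MeasurableSpace α] {μ : Measure α}
    [IsFiniteMeasure μ] {c : ℝ} (hc : 0 ≤ c) {g : α → ℝ} (hg : AEMeasurable g μ) :
    Integrable (fun a => exp (-c * g a ^ 2)) μ := by
  refine .of_bound (by fun_prop) 1 (.of_forall fun a => ?_)
  simpa using mul_nonneg hc (sq_nonneg (g a))

lemma integral_comp_le_of_indepFun {Ω α β : Type*} [MeasurableSpace Ω] [MeasurableSpace α]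
    [MeasurableSpace β] {μ : Measure Ω} [IsProbabilityMeasure μ] {X : Ω → α} {Y : Ω → β}
    (hX : AEMeasurable X μ) (hY : AEMeasurable Y μ) (hXY : IndepFun X Y μ) {g : α × β → ℝ}
    (hg : Integrable g ((μ.map X).prod (μ.map Y))) {C : ℝ}
    (hC : ∀ y, ∫ x, g (x, y) ∂(μ.map X) ≤ C) : ∫ ω, g (X ω, Y ω) ∂μ ≤ C := by
  have := Measure.isProbabilityMeasure_map hX
  have := Measure.isProbabilityMeasure_map hY
  have hlaw := (indepFun_iff_map_prod_eq_prod_map_map hX hY).1 hXY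
  calc ∫ ω, g (X ω, Y ω) ∂μ
      = ∫ z, g z ∂((μ.map X).prod (μ.map Y)) := by
        rw [← hlaw, integral_map (hX.prodMk hY) (hlaw ▸ hg.aestronglyMeasurable)]
    _ = ∫ y, ∫ x, g (x, y) ∂(μ.map X) ∂(μ.map Y) := integral_prod_symm g hg
    _ ≤ ∫ _, C ∂(μ.map Y) := integral_mono hg.integral_prod_right (integrable_const C) hC
    _ = C := by simp

lemma modIco_eq_toIcoMod {a b : ℝ} (h : 0 < b - a) (x : ℝ) : modIco a b x = toIcoMod h a x := by
  rw [modIco, toIcoMod_eq_add_fract_mul, mul_comm]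

lemma Lc_pos : 0 < Lc := by
  unfold Lc
  positivity

lemma starI_eq_toIcoMod (x : ℝ) : starI x = toIcoMod Lc_pos (-(Lc / 2)) x := by
  have hlen : Lc / 2 - -(Lc / 2) = Lc := by ring
  rw [starI, modIco_eq_toIcoMod (by linarith [Lc_pos])]
  simp only [hlen]

lemma measurable_starI : Measurable starI := by
  unfold starI modIco
  fun_prop

lemma abs_starI_sub_starI_lt (x y : ℝ) : |starI x - starI y| < Lc := by
  obtain ⟨hx, hx'⟩ := toIcoMod_mem_Ico Lc_pos (-(Lc / 2)) x
  obtain ⟨hy, hy'⟩ := toIcoMod_mem_Ico Lc_pos (-(Lc / 2)) y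
  rw [starI_eq_toIcoMod, starI_eq_toIcoMod, abs_lt]
  constructor <;> linarith

lemma exists_starI_sub_starI_eq (x y : ℝ) :
    ∃ n : ℤ, starI x - starI y = x - y - n * Lc := by
  refine ⟨toIcoDiv Lc_pos (-(Lc / 2)) x - toIcoDiv Lc_pos (-(Lc / 2)) y, ?_⟩
  simp only [starI_eq_toIcoMod, toIcoMod, zsmul_eq_mul]
  push_cast
  ring

lemma deltaP_intCast_add (p : ℕ) (n : ℤ) (γ : ℝ) : deltaP p (n + γ) = deltaP p γ := by
  have hround (l : ℕ) : (l : ℝ) * (n + γ) - round ((l : ℝ) * (n + γ)) = l * γ - round (l * γ) := by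
    have hsplit : (l : ℝ) * (n + γ) = ((l * n : ℤ) : ℝ) + l * γ := by push_cast; ring
    rw [hsplit, round_intCast_add]
    push_cast
    ring
  simp only [deltaP, hround]

section deltaP

variable {p : ℕ} {γ : ℝ}

lemma one_lt_of_deltaP_pos (h : 0 < deltaP p γ) : 1 < p := by
  by_contra! hp
  -- The minimum is then over the empty set, whose `sInf` is `0`.
  refine h.not_ge (Real.sInf_nonpos ?_)
  rintro _ ⟨l, hl, hlp, -⟩
  omega

lemma deltaP_le_abs_mul_sub {m : ℤ} (hm : m ≠ 0) (hmp : |m| < p) (n : ℤ) :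
    deltaP p γ ≤ |m * γ - n| := by
  have hnat {l : ℕ} (hl : l ≠ 0) (hlp : l < p) (n : ℤ) : deltaP p γ ≤ |l * γ - n| := by
    refine le_trans (csInf_le ⟨0, ?_⟩ ⟨l, by omega, by omega, rfl⟩) (round_le _ n)
    rintro _ ⟨_, -, -, rfl⟩
    positivity
  obtain ⟨l, rfl | rfl⟩ := m.eq_nat_or_neg
  · simpa using hnat (by simpa using hm) (by simpa using hmp) n
  · have hneg : ((-l : ℤ) : ℝ) * γ - n = -(l * γ - (-n : ℤ)) := by push_cast; ring
    rw [hneg, abs_neg]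
    exact hnat (by simpa using hm) (by simpa using hmp) (-n)

end deltaP

lemma integral_uniformConst {E : Type*} [NormedAddCommGroup E] [NormedSpace ℝ E] [CompleteSpace E]
    (p : ℕ) (g : ℝ → E) :
    ∫ x, g x ∂(uniformConst p) = (p : ℝ)⁻¹ • ∑ k ∈ Finset.range p, g (constPt p k) := by
  rw [uniformConst, integral_smul_measure,
    integral_finsetSum_measure fun _ _ => integrable_dirac (by simp [enorm])]
  simp

section Constellation

variable {p : ℕ} {γ : ℝ}

lemma exists_constPt_sub_constPt_eq {j k : ℕ} (hj : j < p) (hk : k < p) (hjk : j ≠ k) :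
    ∃ m : ℤ, m ≠ 0 ∧ |m| < p ∧ constPt p j - constPt p k = Lc / p * m := by
  have hp : (0 : ℝ) < p := mod_cast hj.pos
  obtain ⟨n, hn⟩ := exists_starI_sub_starI_eq (Lc / p * j) (Lc / p * k)
  have hdiff : constPt p j - constPt p k = Lc / p * ((j - k - p * n : ℤ) : ℝ) := by
    rw [constPt, constPt, hn]
    push_cast
    field_simp
  refine ⟨j - k - p * n, fun hzero => hjk ?_, ?_, hdiff⟩
  · have hdvd : (p : ℤ) ∣ j - k := ⟨n, by omega⟩
    have := Int.eq_zero_of_abs_lt_dvd hdvd (Int.abs_sub_lt_of_lt_lt hk hj)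
    omega
  · have hlt : Lc / p * |((j - k - p * n : ℤ) : ℝ)| < Lc / p * p := by
      rw [← abs_of_pos (div_pos Lc_pos hp), ← abs_mul, ← hdiff, abs_of_pos (div_pos Lc_pos hp),
        div_mul_cancel₀ _ hp.ne']
      exact abs_starI_sub_starI_lt _ _
    exact_mod_cast lt_of_mul_lt_mul_left hlt (div_pos Lc_pos hp).le

lemma mul_deltaP_le_abs_starI_sub_starI (θ : ℝ) {j k : ℕ} (hj : j < p) (hk : k < p)
    (hjk : j ≠ k) :
    Lc / p * deltaP p γ ≤ |starI (γ * constPt p j + θ) - starI (γ * constPt p k + θ)| := by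
  have hp : (0 : ℝ) < p := mod_cast hj.pos
  obtain ⟨m, hm, hmp, hdiff⟩ := exists_constPt_sub_constPt_eq hj hk hjk
  obtain ⟨n, hn⟩ := exists_starI_sub_starI_eq (γ * constPt p j + θ) (γ * constPt p k + θ)
  have hdiffU : starI (γ * constPt p j + θ) - starI (γ * constPt p k + θ) =
      Lc / p * (m * γ - (p * n : ℤ)) := by
    rw [hn, add_sub_add_right_eq_sub, ← mul_sub, hdiff]
    push_cast
    field_simp
  rw [hdiffU, abs_mul, abs_of_pos (div_pos Lc_pos hp)]
  gcongr
  · exact (div_pos Lc_pos hp).le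
  · exact deltaP_le_abs_mul_sub hm hmp _

lemma integral_uniformConst_exp_neg_mul_sq_le {c : ℝ} (hc : 0 < c) (hδ : 0 < deltaP p γ)
    (θ : ℝ) :
    ∫ x, exp (-c * starI (γ * x + θ) ^ 2) ∂(uniformConst p) ≤
      1 / p + √(π / c) / (Lc * deltaP p γ) := by
  have hp : (0 : ℝ) < p := mod_cast one_pos.trans (one_lt_of_deltaP_pos hδ)
  have hsum := sum_exp_neg_mul_sq_le hc (mul_pos (div_pos Lc_pos hp) hδ)
    (x := fun k => starI (γ * constPt p k + θ)) (s := Finset.range p) fun j hj k hk hjk =>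
      mul_deltaP_le_abs_starI_sub_starI θ (Finset.mem_range.1 hj) (Finset.mem_range.1 hk) hjk
  calc ∫ x, exp (-c * starI (γ * x + θ) ^ 2) ∂(uniformConst p)
      = (p : ℝ)⁻¹ * ∑ k ∈ Finset.range p, exp (-c * starI (γ * constPt p k + θ) ^ 2) :=
        integral_uniformConst p _
    _ ≤ (p : ℝ)⁻¹ * (1 + √(π / c) / (Lc / p * deltaP p γ)) := by gcongr
    _ = 1 / p + √(π / c) / (Lc * deltaP p γ) := by field_simp

end Constellation

lemma sqrt_pi_div_div_Lc_mul {δ : ℝ} (hδ : 0 ≤ δ) (SNR : ℝ) :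
    √(π / (SNR / 8)) / (Lc * δ) = √(2 * π / (3 * δ ^ 2 * SNR)) := by
  have hLδ : Lc * δ = √(12 * δ ^ 2) := by rw [Lc, sqrt_mul (by norm_num), sqrt_sq hδ]
  rw [hLδ, ← sqrt_div' _ (by positivity)]
  congr 1
  field_simp
  norm_num

theorem lemma_expectation_scaled_general {p : ℕ} {SNR γ : ℝ} (hSNR : 0 < SNR)
    (hδ : 0 < deltaP p γ) {Ω : Type*} [MeasurableSpace Ω] {μ : Measure Ω}
    [IsProbabilityMeasure μ] {X Θ : Ω → ℝ} (hX : AEMeasurable X μ) (hΘ : AEMeasurable Θ μ)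
    (hXunif : μ.map X = uniformConst p) (hindep : IndepFun X Θ μ) :
    ∫ ω, exp (-(SNR / 8) * starI (γ * X ω + Θ ω) ^ 2) ∂μ
      ≤ 1 / p + √(2 * π / (3 * deltaP p γ ^ 2 * SNR)) := by
  have := Measure.isProbabilityMeasure_map hX
  have := Measure.isProbabilityMeasure_map hΘ
  have hint : Integrable (fun z : ℝ × ℝ => exp (-(SNR / 8) * starI (γ * z.1 + z.2) ^ 2))
      ((μ.map X).prod (μ.map Θ)) :=
    integrable_exp_neg_mul_sq_comp (by positivity)
      (measurable_starI.comp (by fun_prop)).aemeasurable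
  refine integral_comp_le_of_indepFun hX hΘ hindep hint fun θ => ?_
  rw [hXunif, ← sqrt_pi_div_div_Lc_mul hδ.le]
  exact integral_uniformConst_exp_neg_mul_sq_le (by positivity) hδ θ

/-- **Lemma 4.** For `X` uniform on `Λ_p`, `Θ` independent of `X`, `f ∈ {0,…,p−1}` and
`ε ∈ ℝ`, with `U = ((f+ε)·X + Θ)*`, one has
`𝔼[exp(−(SNR/8)·U²)] ≤ 1/p + √(2π/(3·δ(p,ε)²·SNR))`. -/
theorem lemma_expectation_scaled
    (p : ℕ) (hp : p.Prime) (SNR : ℝ) (hSNR : 0 < SNR)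
    (f : ℕ) (hf : f ≤ p - 1) (ε : ℝ) (hδ : 0 < deltaP p ε)
    (Ω : Type) (_ : MeasurableSpace Ω) (μ : Measure Ω) [IsProbabilityMeasure μ]
    (X Θ : Ω → ℝ) (hX : Measurable X) (hΘ : Measurable Θ)
    (hXunif : Measure.map X μ = uniformConst p)
    (hindep : IndepFun X Θ μ) :
    ∫ ω, Real.exp (-(SNR / 8) * (starI (((f : ℝ) + ε) * X ω + Θ ω)) ^ 2) ∂μ
      ≤ 1 / (p : ℝ) + Real.sqrt (2 * π / (3 * (deltaP p ε) ^ 2 * SNR)) := by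
  have hmod : deltaP p (f + ε) = deltaP p ε := mod_cast deltaP_intCast_add p f ε
  rw [← hmod] at hδ ⊢
  exact lemma_expectation_scaled_general hSNR hδ hX.aemeasurable hΘ.aemeasurable hXunif hindep
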